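/- Let s, x ∈ ℍ with Q_{c,s}(x) := s² − 2(re x)·s + ‖x‖² ≠ 0, and let α ∈ ℕ. Define F : ℍ → ℍ by F(y) = (s − ȳ) · (s² − 2(re y)·s + ‖y‖²)^{−α}. Then F is (real) differentiable at x and (D̄ F)(x) := ∂₀F(x) − i·∂₁F(x) − j·∂₂F(x) − k·∂₃F(x) = 2(1 − α) · Q_{c,s}(x)^{−α} + 4α · (s − x̄) · (s − re x) · Q_{c,s}(x)^{−α−1}. -/

import Mathlib

open Quaternion

/-- The basis quaternion `i`. -/
def qi : ℍ[ℝ] := ⟨0, 1, 0, 0⟩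
/-- The basis quaternion `j`. -/
def qj : ℍ[ℝ] := ⟨0, 0, 1, 0⟩
/-- The basis quaternion `k`. -/
def qk : ℍ[ℝ] := ⟨0, 0, 0, 1⟩

/-- The conjugate Cauchy–Fueter operator
`(D̄ F)(x) = ∂₀F(x) − i·∂₁F(x) − j·∂₂F(x) − k·∂₃F(x)`, where `∂_μF(x)` is the real Fréchet
derivative of `F` at `x` applied to the basis quaternion `e_μ`. -/
noncomputable def DiracBar (F : ℍ[ℝ] → ℍ[ℝ]) (x : ℍ[ℝ]) : ℍ[ℝ] :=
  fderiv ℝ F x 1 - qi * fderiv ℝ F x qi - qj * fderiv ℝ F x qj - qk * fderiv ℝ F x qk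

/-- The commutative pseudo-Cauchy kernel `Q_{c,s}(y) = s² − 2(re y)·s + ‖y‖²`. -/
noncomputable def Qcs (s y : ℍ[ℝ]) : ℍ[ℝ] :=
  s ^ 2 - 2 * ((y.re : ℝ) : ℍ[ℝ]) * s + ((‖y‖ ^ 2 : ℝ) : ℍ[ℝ])

/-- Power rule for negative powers in a normed division algebra, when the derivative of `f` takes
values commuting with `f x`. -/
theorem HasFDerivAt.zpow_neg_of_commute {E R : Type*} [NormedAddCommGroup E] [NormedSpace ℝ E]
    [NormedDivisionRing R] [NormedAlgebra ℝ R] {f : E → R} {f' : E →L[ℝ] R} {x : E}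
    (hf : HasFDerivAt f f' x) (h0 : f x ≠ 0) (hc : ∀ h, Commute (f x) (f' h)) (n : ℕ) :
    HasFDerivAt (fun y => f y ^ (-(n : ℤ)))
      (-(n : ℝ) • (ContinuousLinearMap.mul ℝ R (f x ^ (-(n : ℤ) - 1))).comp f') x := by
  induction n with
  | zero => simpa using hasFDerivAt_const (1 : R) x
  | succ n ih =>
    have hpow : ∀ z : R, z ^ (-((n + 1 : ℕ) : ℤ)) = z ^ (-(n : ℤ)) * z⁻¹ := by
      intro z
      rw [zpow_neg, zpow_natCast, zpow_neg, zpow_natCast, pow_succ', mul_inv_rev]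
    have hinv : HasFDerivAt (fun y => (f y)⁻¹) _ x :=
      (hasFDerivAt_inv' (𝕜 := ℝ) h0).comp x hf
    simp only [hpow]
    refine (ih.mul' hinv).congr_fderiv ?_
    ext h
    have hci : Commute (f x)⁻¹ (f' h) := (hc h).inv_left₀
    have e₁ : f x ^ (-((n + 1 : ℕ) : ℤ) - 1) = f x ^ (-(n : ℤ)) * (f x)⁻¹ * (f x)⁻¹ := by
      rw [zpow_sub_one₀ h0, hpow]
    have e₂ : f x ^ (-(n : ℤ) - 1) = f x ^ (-(n : ℤ)) * (f x)⁻¹ := zpow_sub_one₀ h0 _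
    simp only [e₁, e₂, _root_.add_apply, _root_.smul_apply,
      ContinuousLinearMap.comp_apply, ContinuousLinearMap.mul_apply', smul_eq_mul,
      _root_.neg_apply, ContinuousLinearMap.mulLeftRight_apply,
      MulOpposite.smul_eq_mul_unop, MulOpposite.unop_op, smul_mul_assoc, mul_assoc, ← hci.eq,
      mul_neg]
    push_cast
    module

instance : StarModule ℝ ℍ[ℝ] := ⟨fun r q => by simp [Quaternion.star_smul]⟩

/-- The real Fréchet derivative of `Qcs s` at `x`. -/
noncomputable def QcsDeriv (s x : ℍ[ℝ]) : ℍ[ℝ] →L[ℝ] ℍ[ℝ] :=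
  (2 • innerSL ℝ x).smulRight (1 : ℍ[ℝ]) -
    (2 • innerSL ℝ (1 : ℍ[ℝ])).smulRight s

theorem QcsDeriv_apply (s x h : ℍ[ℝ]) :
    QcsDeriv s x h = (2 * inner ℝ x h : ℝ) • (1 : ℍ[ℝ]) - (2 * h.re : ℝ) • s := by
  simp [QcsDeriv, Quaternion.inner_def, two_mul, two_smul]

theorem Qcs_eq (s y : ℍ[ℝ]) :
    Qcs s y = s ^ 2 - (2 * inner ℝ (1 : ℍ[ℝ]) y : ℝ) • s + (‖y‖ ^ 2 : ℝ) • (1 : ℍ[ℝ]) := by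
  have h2 : (2 : ℍ[ℝ]) = ((2 : ℝ) : ℍ[ℝ]) := by norm_cast
  rw [Qcs, h2, ← Quaternion.coe_mul, Quaternion.coe_mul_eq_smul]
  simp [Quaternion.inner_def, ← Quaternion.coe_mul_eq_smul]

theorem hasFDerivAt_Qcs (s x : ℍ[ℝ]) : HasFDerivAt (Qcs s) (QcsDeriv s x) x := by
  rw [show Qcs s = _ from funext (Qcs_eq s)]
  have h₁ := (((innerSL ℝ (1 : ℍ[ℝ])).hasFDerivAt (x := x)).const_mul 2).smul_const s
  have h₂ := (hasStrictFDerivAt_norm_sq x).hasFDerivAt.smul_const (1 : ℍ[ℝ])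
  refine ((h₁.const_sub (s ^ 2)).add h₂).congr_fderiv ?_
  ext1 h
  simp [QcsDeriv, two_smul]
  abel

theorem commute_Qcs_QcsDeriv (s x h : ℍ[ℝ]) : Commute (Qcs s x) (QcsDeriv s x h) := by
  have hs : Commute (Qcs s x) s := by
    rw [Qcs_eq]
    exact (((Commute.refl s).pow_left 2).sub_left ((Commute.refl s).smul_left _)).add_left
      ((Commute.one_left s).smul_left _)
  rw [QcsDeriv_apply]
  exact ((Commute.one_right _).smul_right _).sub_right (hs.smul_right _)

/-- The product-rule expansion of the conjugate Cauchy–Fueter operator, with the common right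
factor `Qcs s x ^ (-α - 1)` removed. -/
theorem diracBar_expansion (s x : ℍ[ℝ]) (a : ℝ) (D : ℍ[ℝ] → ℍ[ℝ])
    (hD : ∀ h, D h = -a • ((s - star x) * QcsDeriv s x h) - star h * Qcs s x) :
    D 1 - qi * D qi - qj * D qj - qk * D qk =
      ((2 * (1 - a) : ℝ) : ℍ[ℝ]) * Qcs s x
        + ((4 * a : ℝ) : ℍ[ℝ]) * ((s - star x) * (s - ((x.re : ℝ) : ℍ[ℝ]))) := by
  simp only [hD, QcsDeriv_apply, Qcs_eq, ← real_inner_self_eq_norm_sq, Quaternion.inner_def]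
  obtain ⟨i₀, i₁, i₂, i₃⟩ : qi.re = 0 ∧ qi.imI = 1 ∧ qi.imJ = 0 ∧ qi.imK = 0 := ⟨rfl, rfl, rfl, rfl⟩
  obtain ⟨j₀, j₁, j₂, j₃⟩ : qj.re = 0 ∧ qj.imI = 0 ∧ qj.imJ = 1 ∧ qj.imK = 0 := ⟨rfl, rfl, rfl, rfl⟩
  obtain ⟨k₀, k₁, k₂, k₃⟩ : qk.re = 0 ∧ qk.imI = 0 ∧ qk.imJ = 0 ∧ qk.imK = 1 := ⟨rfl, rfl, rfl, rfl⟩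
  ext <;> simp [i₀, i₁, i₂, i₃, j₀, j₁, j₂, j₃, k₀, k₁, k₂, k₃, pow_two] <;> ring

/-- For `Q_{c,s}(x) ≠ 0` and `α ∈ ℕ`, the map `F(y) = (s − ȳ)·Q_{c,s}(y)^{−α}` is real
differentiable at `x` and
`(D̄ F)(x) = 2(1 − α)·Q_{c,s}(x)^{−α} + 4α·(s − x̄)·(s − re x)·Q_{c,s}(x)^{−α−1}`. -/
theorem statement12 (s x : ℍ[ℝ]) (hQ : Qcs s x ≠ 0) (α : ℕ) :
    DifferentiableAt ℝ (fun y => (s - star y) * Qcs s y ^ (-(α : ℤ))) x ∧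
    DiracBar (fun y => (s - star y) * Qcs s y ^ (-(α : ℤ))) x
      = ((2 * (1 - (α : ℝ)) : ℝ) : ℍ[ℝ]) * Qcs s x ^ (-(α : ℤ))
        + ((4 * (α : ℝ) : ℝ) : ℍ[ℝ])
            * ((s - star x) * (s - ((x.re : ℝ) : ℍ[ℝ])) * Qcs s x ^ (-(α : ℤ) - 1)) := by
  have hstar : HasFDerivAt (fun y : ℍ[ℝ] => s - star y) _ x :=
    ((starL' ℝ : ℍ[ℝ] ≃L[ℝ] ℍ[ℝ]).hasFDerivAt (x := x)).const_sub s
  have hF : HasFDerivAt (fun y => (s - star y) * Qcs s y ^ (-(α : ℤ))) _ x := hstar.mul'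
    ((hasFDerivAt_Qcs s x).zpow_neg_of_commute hQ (commute_Qcs_QcsDeriv s x) α)
  refine ⟨hF.differentiableAt, ?_⟩
  set P := Qcs s x ^ (-(α : ℤ) - 1) with hP
  have hQP : Qcs s x ^ (-(α : ℤ)) = Qcs s x * P := by
    rw [hP, ← zpow_one_add₀ hQ]; congr 1; ring
  have hcomm : ∀ h, P * QcsDeriv s x h = QcsDeriv s x h * P := fun h =>
    ((commute_Qcs_QcsDeriv s x h).zpow_left₀ _).eq
  have key : ∀ h, fderiv ℝ (fun y => (s - star y) * Qcs s y ^ (-(α : ℤ))) x h =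
      (-(α : ℝ) • ((s - star x) * QcsDeriv s x h) - star h * Qcs s x) * P := by
    intro h
    rw [hF.fderiv]
    simp [hQP, hcomm, sub_eq_add_neg]
    simp only [add_mul, neg_mul, smul_mul_assoc, mul_assoc]
  rw [DiracBar, key, key, key, key, hQP]
  simp only [← mul_assoc, ← sub_mul, ← add_mul]
  congr 1
  have := diracBar_expansion s x α _ fun h => rfl
  simpa only [mul_assoc] using this
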